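/- Let m, n ≥ 1, μ ∈ ℝ^m and ν ∈ ℝⁿ be probability vectors, C = (c_{ij}) ∈ ℝ^{m×n}, λ > 0, and E_λ(ψ) = λ Σ_{i=1}^m μ_i log(Σ_{j=1}^n e^{(ψ_j − c_{ij})/λ}) − Σ_{j=1}^n ν_j ψ_j − λ log n. Then E_λ is convex on ℝⁿ and its gradient is (1/λ)-Lipschitz with respect to the Euclidean norm: ‖∇E_λ(ψ) − ∇E_λ(φ)‖₂ ≤ (1/λ)‖ψ − φ‖₂ for all ψ, φ ∈ ℝⁿ. -/

import Mathlib

/-! The functional `E_λ` is a `μ`-average of log-sum-exp functions of `(ψ - C i) / λ`, up to an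
affine term.

Convexity: normalising the exponentials by `exp (-L x)` and `exp (-L y)`, where `L` is log-sum-exp,
the convexity of `exp` summed over the coordinates gives `L (a x + b y) ≤ a L x + b L y`.

Smoothness: the gradient of log-sum-exp is the softmax map, whose Jacobian at a point with softmax
weights `p` is the covariance form `(d, w) ↦ Cov_p (d, w)`. This form is bounded by `‖d‖ ‖w‖`
(`abs_cov_le`), so softmax is `1`-Lipschitz (`softmax_lipschitz_weak`, by the mean value theorem on
a segment, tested against a fixed `w`). The rescaling by `1 / λ` and the averaging over `μ` then
yield the constant `1 / λ`. -/

/-- The softmax weights `exp (x j) / ∑ k, exp (x k)`. -/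
noncomputable def softmax {n : ℕ} (x : Fin n → ℝ) (j : Fin n) : ℝ :=
  Real.exp (x j) / ∑ k, Real.exp (x k)

lemma sum_exp_pos {n : ℕ} (hn : 1 ≤ n) (x : Fin n → ℝ) : 0 < ∑ k, Real.exp (x k) := by
  have : Nonempty (Fin n) := ⟨⟨0, hn⟩⟩
  exact Finset.sum_pos (fun k _ => Real.exp_pos _) Finset.univ_nonempty

lemma softmax_nonneg {n : ℕ} (x : Fin n → ℝ) (j : Fin n) : 0 ≤ softmax x j := by
  unfold softmax; positivity

lemma softmax_sum {n : ℕ} (hn : 1 ≤ n) (x : Fin n → ℝ) : ∑ j, softmax x j = 1 := by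
  unfold softmax
  rw [← Finset.sum_div, div_self (sum_exp_pos hn x).ne']

/-- The covariance of `d` and `w` under a probability vector is bounded by the product of their
Euclidean norms: Cauchy–Schwarz, and the variance of `d` is at most `∑ j, d j ^ 2`. -/
lemma abs_cov_le {n : ℕ} (p d w : Fin n → ℝ) (hp : ∀ j, 0 ≤ p j) (hp1 : ∑ j, p j = 1) :
    |∑ j, p j * d j * w j - (∑ j, p j * d j) * ∑ j, p j * w j|
      ≤ √(∑ j, d j ^ 2) * √(∑ j, w j ^ 2) := by
  have hple : ∀ j, p j ≤ 1 := fun j => by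
    rw [← hp1]; exact Finset.single_le_sum (fun k _ => hp k) (Finset.mem_univ j)
  set b := ∑ j, p j * d j with hb
  have h1 : ∑ j, p j * d j * w j - b * ∑ j, p j * w j = ∑ j, (p j * (d j - b)) * w j := by
    rw [Finset.mul_sum, ← Finset.sum_sub_distrib]
    exact Finset.sum_congr rfl fun j _ => by ring
  have h2 : ∑ j, p j * (d j - b) ^ 2 = ∑ j, p j * d j ^ 2 - b ^ 2 := by
    have : ∀ j, p j * (d j - b) ^ 2 = p j * d j ^ 2 - 2 * b * (p j * d j) + b ^ 2 * p j :=
      fun j => by ring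
    simp_rw [this]
    rw [Finset.sum_add_distrib, Finset.sum_sub_distrib, ← Finset.mul_sum, ← Finset.mul_sum,
      hp1, ← hb]
    ring
  have h3 : ∑ j, (p j * (d j - b)) ^ 2 ≤ ∑ j, p j * (d j - b) ^ 2 := by
    refine Finset.sum_le_sum fun j _ => ?_
    rw [mul_pow]
    exact mul_le_mul_of_nonneg_right (by nlinarith [hp j, hple j]) (sq_nonneg _)
  have h4 : ∑ j, p j * d j ^ 2 ≤ ∑ j, d j ^ 2 :=
    Finset.sum_le_sum fun j _ => mul_le_of_le_one_left (sq_nonneg _) (hple j)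
  rw [h1, ← Real.sqrt_mul (Finset.sum_nonneg fun j _ => sq_nonneg _)]
  refine Real.abs_le_sqrt ((Finset.sum_mul_sq_le_sq_mul_sq _ _ _).trans ?_)
  refine mul_le_mul_of_nonneg_right ?_ (Finset.sum_nonneg fun j _ => sq_nonneg _)
  linarith [sq_nonneg b]

/-- The derivative of softmax along a line, tested against `w`, is a covariance. -/
lemma hasDerivAt_softmax_line {n : ℕ} (hn : 1 ≤ n) (y d w : Fin n → ℝ) (t : ℝ) :
    HasDerivAt (fun t : ℝ => ∑ j, softmax (fun k => y k + t * d k) j * w j)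
      (∑ j, softmax (fun k => y k + t * d k) j * d j * w j
        - (∑ j, softmax (fun k => y k + t * d k) j * d j)
          * ∑ j, softmax (fun k => y k + t * d k) j * w j) t := by
  have he : ∀ k, HasDerivAt (fun t : ℝ => Real.exp (y k + t * d k))
      (Real.exp (y k + t * d k) * d k) t := fun k => by
    simpa using (((hasDerivAt_id t).mul_const (d k)).const_add (y k)).exp
  have hS := HasDerivAt.fun_sum (u := Finset.univ) fun k _ => he k
  have hpos := sum_exp_pos hn (fun k => y k + t * d k)
  have h := HasDerivAt.fun_sum (u := Finset.univ) fun j _ =>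
    ((he j).fun_div hS hpos.ne').mul_const (w j)
  refine h.congr_deriv ?_
  rw [Finset.mul_sum, ← Finset.sum_sub_distrib]
  refine Finset.sum_congr rfl fun j _ => ?_
  have : ∑ k, softmax (fun k => y k + t * d k) k * d k
      = (∑ k, Real.exp (y k + t * d k) * d k) / ∑ k, Real.exp (y k + t * d k) := by
    rw [Finset.sum_div]
    exact Finset.sum_congr rfl fun k _ => by unfold softmax; ring
  rw [this]
  unfold softmax
  field_simp

/-- Softmax is `1`-Lipschitz for the Euclidean norm, in the form tested against a vector `w`. -/
lemma softmax_lipschitz_weak {n : ℕ} (hn : 1 ≤ n) (x y w : Fin n → ℝ) :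
    |∑ j, (softmax x j - softmax y j) * w j|
      ≤ √(∑ j, (x j - y j) ^ 2) * √(∑ j, w j ^ 2) := by
  have h := (convex_univ (𝕜 := ℝ) (E := ℝ)).norm_image_sub_le_of_norm_hasDerivWithin_le
    (fun t _ => (hasDerivAt_softmax_line hn y (fun k => x k - y k) w t).hasDerivWithinAt)
    (fun t _ => abs_cov_le _ (fun k => x k - y k) w (softmax_nonneg _) (softmax_sum hn _))
    (Set.mem_univ 0) (Set.mem_univ 1)
  simpa [← Finset.sum_sub_distrib, sub_mul] using h

lemma logSumExp_convex {n : ℕ} (hn : 1 ≤ n) (x y : Fin n → ℝ) {a b : ℝ}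
    (ha : 0 ≤ a) (hb : 0 ≤ b) (hab : a + b = 1) :
    Real.log (∑ j, Real.exp (a * x j + b * y j))
      ≤ a * Real.log (∑ j, Real.exp (x j)) + b * Real.log (∑ j, Real.exp (y j)) := by
  have norm1 : ∀ z : Fin n → ℝ, ∑ j, Real.exp (z j - Real.log (∑ k, Real.exp (z k))) = 1 := by
    intro z
    simp_rw [Real.exp_sub, Real.exp_log (sum_exp_pos hn z)]
    exact softmax_sum hn z
  have hx := norm1 x
  have hy := norm1 y
  set X := Real.log (∑ j, Real.exp (x j))
  set Y := Real.log (∑ j, Real.exp (y j))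
  have key : ∑ j, Real.exp (a * (x j - X) + b * (y j - Y)) ≤ 1 := by
    calc _ ≤ ∑ j, (a * Real.exp (x j - X) + b * Real.exp (y j - Y)) :=
          Finset.sum_le_sum fun j _ => by
            simpa using convexOn_exp.2 (Set.mem_univ (x j - X)) (Set.mem_univ (y j - Y)) ha hb hab
      _ = 1 := by
          rw [Finset.sum_add_distrib, ← Finset.mul_sum, ← Finset.mul_sum, hx, hy]; linarith
  rw [Real.log_le_iff_le_exp (sum_exp_pos hn _)]
  have h2 : ∑ j, Real.exp (a * x j + b * y j)
      = Real.exp (a * X + b * Y) * ∑ j, Real.exp (a * (x j - X) + b * (y j - Y)) := by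
    rw [Finset.mul_sum]
    refine Finset.sum_congr rfl fun j _ => ?_
    rw [← Real.exp_add]; congr 1; ring
  rw [h2]
  exact mul_le_of_le_one_right (Real.exp_pos _).le key

/-- The gradient of `E_λ` at `ψ` is the `μ`-average of the softmax vectors, minus `ν`. -/
lemma hasGradientAt_smoothed {m n : ℕ} (hn : 1 ≤ n) (μ : Fin m → ℝ) (ν : Fin n → ℝ)
    (C : Fin m → Fin n → ℝ) {lam : ℝ} (hlam : 0 < lam) (ψ : EuclideanSpace ℝ (Fin n)) :
    HasGradientAt (fun ψ : EuclideanSpace ℝ (Fin n) =>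
      lam * ∑ i, μ i * Real.log (∑ j, Real.exp ((ψ j - C i j) / lam))
        - ∑ j, ν j * ψ j - lam * Real.log n)
      (WithLp.toLp 2 fun j => ∑ i, μ i * softmax (fun k => (ψ k - C i k) / lam) j - ν j) ψ := by
  rw [hasGradientAt_iff_hasFDerivAt]
  have hc : ∀ j, HasFDerivAt (fun ψ : EuclideanSpace ℝ (Fin n) => ψ j)
      (EuclideanSpace.proj j : EuclideanSpace ℝ (Fin n) →L[ℝ] ℝ) ψ :=
    fun j => (EuclideanSpace.proj j : EuclideanSpace ℝ (Fin n) →L[ℝ] ℝ).hasFDerivAt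
  have he : ∀ i j, HasFDerivAt
      (fun ψ : EuclideanSpace ℝ (Fin n) => Real.exp ((ψ j - C i j) / lam))
      (Real.exp ((ψ j - C i j) / lam) • lam⁻¹ •
        (EuclideanSpace.proj j : EuclideanSpace ℝ (Fin n) →L[ℝ] ℝ)) ψ := fun i j => by
    simpa only [div_eq_mul_inv] using (((hc j).sub_const (C i j)).mul_const lam⁻¹).exp
  have hl := fun i => (HasFDerivAt.fun_sum (u := Finset.univ) fun j _ => he i j).log
    (sum_exp_pos hn fun j => (ψ j - C i j) / lam).ne'
  have h := (((HasFDerivAt.fun_sum (u := Finset.univ) fun i _ =>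
    (hl i).const_mul (μ i)).const_mul lam).fun_sub
      (HasFDerivAt.fun_sum (u := Finset.univ) fun j _ => (hc j).const_mul (ν j))).sub_const
        (lam * Real.log n)
  refine h.congr_fderiv ?_
  ext v
  simp only [_root_.sub_apply, _root_.smul_apply,
    _root_.sum_apply, InnerProductSpace.toDual_apply_apply, PiLp.inner_apply,
    PiLp.proj_apply, smul_eq_mul, softmax, RCLike.inner_apply, conj_trivial]
  simp_rw [mul_sub, Finset.sum_sub_distrib, Finset.mul_sum]
  rw [Finset.sum_comm]
  congr 1
  · refine Finset.sum_congr rfl fun j _ => Finset.sum_congr rfl fun i _ => ?_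
    field_simp
  · exact Finset.sum_congr rfl fun j _ => mul_comm _ _


/-- The Nesterov smoothing `E_λ` of the dual Kantorovich functional is
convex on `ℝⁿ` and its gradient is `(1/λ)`-Lipschitz with respect to the Euclidean norm. -/
theorem smoothed_kantorovich_convex_smooth
    (m n : ℕ) (hm : 1 ≤ m) (hn : 1 ≤ n)
    (μ : Fin m → ℝ) (ν : Fin n → ℝ)
    (hμ0 : ∀ i, 0 ≤ μ i) (hμ1 : ∑ i, μ i = 1)
    (hν0 : ∀ j, 0 ≤ ν j) (hν1 : ∑ j, ν j = 1)
    (C : Fin m → Fin n → ℝ) (lam : ℝ) (hlam : 0 < lam)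
    (Elam : EuclideanSpace ℝ (Fin n) → ℝ)
    (hElam : ∀ ψ, Elam ψ =
      lam * ∑ i, μ i * Real.log (∑ j, Real.exp ((ψ j - C i j) / lam))
        - ∑ j, ν j * ψ j - lam * Real.log n) :
    ConvexOn ℝ Set.univ Elam ∧
      ∀ ψ φ : EuclideanSpace ℝ (Fin n),
        ‖gradient Elam ψ - gradient Elam φ‖ ≤ (1 / lam) * ‖ψ - φ‖ := by
  obtain rfl : Elam = _ := funext hElam
  constructor
  · refine ⟨convex_univ, fun x _ y _ a b ha hb hab => ?_⟩
    have hL : ∀ i, Real.log (∑ j, Real.exp (((a • x + b • y) j - C i j) / lam))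
        ≤ a * Real.log (∑ j, Real.exp ((x j - C i j) / lam))
          + b * Real.log (∑ j, Real.exp ((y j - C i j) / lam)) := fun i => by
      refine le_trans (le_of_eq ?_) (logSumExp_convex hn _ _ ha hb hab)
      congr 1
      refine Finset.sum_congr rfl fun j _ => ?_
      congr 1
      simp only [PiLp.add_apply, PiLp.smul_apply, smul_eq_mul]
      obtain rfl : b = 1 - a := by linarith
      ring
    have hsum := mul_le_mul_of_nonneg_left (Finset.sum_le_sum fun i (_ : i ∈ Finset.univ) =>
      mul_le_mul_of_nonneg_left (hL i) (hμ0 i)) hlam.le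
    have hsplit : ∑ i, μ i * (a * Real.log (∑ j, Real.exp ((x j - C i j) / lam))
          + b * Real.log (∑ j, Real.exp ((y j - C i j) / lam)))
        = a * ∑ i, μ i * Real.log (∑ j, Real.exp ((x j - C i j) / lam))
          + b * ∑ i, μ i * Real.log (∑ j, Real.exp ((y j - C i j) / lam)) := by
      rw [Finset.mul_sum, Finset.mul_sum, ← Finset.sum_add_distrib]
      exact Finset.sum_congr rfl fun i _ => by ring
    have hν : ∑ j, ν j * (a • x + b • y) j = a * ∑ j, ν j * x j + b * ∑ j, ν j * y j := by
      rw [Finset.mul_sum, Finset.mul_sum, ← Finset.sum_add_distrib]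
      refine Finset.sum_congr rfl fun j _ => ?_
      simp only [PiLp.add_apply, PiLp.smul_apply, smul_eq_mul]
      ring
    rw [hsplit] at hsum
    simp only [hν, smul_eq_mul]
    obtain rfl : b = 1 - a := by linarith
    linarith
  · intro ψ φ
    rw [(hasGradientAt_smoothed hn μ ν C hlam ψ).gradient,
      (hasGradientAt_smoothed hn μ ν C hlam φ).gradient]
    set w : EuclideanSpace ℝ (Fin n) := _ - _ with hw
    have hwj : ∀ j, w j = ∑ i, μ i * (softmax (fun k => (ψ k - C i k) / lam) j
        - softmax (fun k => (φ k - C i k) / lam) j) := fun j => by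
      simp [hw, mul_sub]
    have hN : ∀ v : EuclideanSpace ℝ (Fin n), √(∑ j, v j ^ 2) = ‖v‖ := fun v => by
      simp [EuclideanSpace.norm_eq]
    have hscale : √(∑ j, ((ψ j - φ j) / lam) ^ 2) = 1 / lam * ‖ψ - φ‖ := by
      rw [← hN]
      simp_rw [div_pow, ← Finset.sum_div, PiLp.sub_apply]
      rw [Real.sqrt_div' _ (sq_nonneg _), Real.sqrt_sq hlam.le]
      ring
    -- Testing the gradient difference `w` against itself.
    have key : ‖w‖ ^ 2 ≤ 1 / lam * ‖ψ - φ‖ * ‖w‖ := by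
      calc ‖w‖ ^ 2 = ∑ j, w j * w j := by
            rw [EuclideanSpace.norm_sq_eq]
            exact Finset.sum_congr rfl fun j _ => by rw [Real.norm_eq_abs, sq_abs, sq]
        _ = ∑ i, μ i * ∑ j, (softmax (fun k => (ψ k - C i k) / lam) j
              - softmax (fun k => (φ k - C i k) / lam) j) * w j := by
            simp_rw [Finset.mul_sum]
            rw [Finset.sum_comm]
            refine Finset.sum_congr rfl fun j _ => ?_
            nth_rewrite 1 [hwj j]
            rw [Finset.sum_mul]
            exact Finset.sum_congr rfl fun i _ => by ring
        _ ≤ ∑ i, μ i * (1 / lam * ‖ψ - φ‖ * ‖w‖) := by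
            refine Finset.sum_le_sum fun i _ => mul_le_mul_of_nonneg_left ?_ (hμ0 i)
            refine (le_abs_self _).trans ((softmax_lipschitz_weak hn _ _ _).trans (le_of_eq ?_))
            have hdiff : ∀ j, (ψ j - C i j) / lam - (φ j - C i j) / lam = (ψ j - φ j) / lam :=
              fun j => by ring
            simp only [hdiff, hN, hscale]
        _ = 1 / lam * ‖ψ - φ‖ * ‖w‖ := by rw [← Finset.sum_mul, hμ1, one_mul]
    rcases (norm_nonneg w).eq_or_lt with h0 | h0
    · rw [← h0]; positivity
    · rw [sq] at key
      exact le_of_mul_le_mul_right key h0
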